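/- arXiv:2510.11338 — 2 statements merged into one kernel-verified Lean document; each statement's English description precedes it below -/
import Mathlib

section
/- Define t_n(x) = Σ_{k=0}^n C(n,k)*C(x,k)*C(x+k,k)*2^k with x = −1/2 in Z_p. For any odd prime p, Σ_{n=0}^{p-1} (8n+5)·t_n(−1/2)^2 ≡ 2p (mod p^2). -/
/-- Generalized binomial coefficient `C(x, k) = x(x-1)⋯(x-k+1)/k!` in `ℚ_[p]`. -/
noncomputable def gbinom {p : ℕ} [Fact p.Prime] (x : ℚ_[p]) (k : ℕ) : ℚ_[p] :=
  (∏ i ∈ Finset.range k, (x - i)) / (k.factorial : ℚ_[p])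

/-- The sequence `t_n(x) = ∑_{k=0}^n C(n,k) C(x,k) C(x+k,k) 2^k`. -/
noncomputable def tseq {p : ℕ} [Fact p.Prime] (x : ℚ_[p]) (n : ℕ) : ℚ_[p] :=
  ∑ k ∈ Finset.range (n+1), (n.choose k : ℚ_[p]) * gbinom x k * gbinom (x + (k : ℚ_[p])) k * 2^k

/-!
Write `p = 2h + 1`. Since `C(x, k) C(x + k, k)` is a polynomial in `x(x + 1)`, and
`x(x + 1) ≡ h(h + 1) (mod p²)` for `x = -1/2`, the number `t_n(-1/2)` may be replaced by `t_n(h)`,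
which is obtained from the shifted Legendre polynomial `P_h` by substituting `(-2)ᵏ C(n, k)` for
`xᵏ`.

The congruence `∑_{n<p} C(n, j) C(n, k) ≡ p (-1)^{j+k} ∫₀¹ xʲ (1 - x)ᵏ dx (mod p²)` turns sums over
`n < p` of products of such substitutions into integrals, and multiplication by `8n + 5` into the
differential operator `D f = 4x(2 - x)f' + (5 - 4x)f`. The sum becomes
`(p/2) ∫₀² D P_h(x) P_h(2 - x) dx`. Folding the interval at `1` produces a total derivative,
contributing `4 P_h(1)² = 4`, and an integral over `[0, 1]` against `P_h`, which orthogonality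
evaluates as `-2(-1)^h (2h + 1) = -2(-1)^h p`.
-/

open Polynomial Finset

section PolynomialIntegral

variable {K : Type*} [Field K]

/-- The formal antiderivative of a polynomial, normalized to vanish at `0`. It divides by `k + 1`,
hence is a right inverse of differentiation only in characteristic zero. -/
noncomputable def polyAntideriv : K[X] →ₗ[K] K[X] :=
  lsum fun k ↦ ((k : K) + 1)⁻¹ • monomial (k + 1)

/-- The integral `∫_a^b f(x) dx` as an algebraic functional on polynomials over any field. It lets
identities for polynomials on `[0, 1]` and `[0, 2]` be used inside `ℚ_p`. -/
noncomputable def polyIntegral (a b : K) : K[X] →ₗ[K] K :=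
  (leval b - leval a) ∘ₗ polyAntideriv

variable [CharZero K]

theorem derivative_polyAntideriv (f : K[X]) : derivative (polyAntideriv f) = f := by
  induction f using Polynomial.induction_on' with
  | add f g hf hg => rw [map_add, map_add, hf, hg]
  | monomial k c =>
    have : (k : K) + 1 ≠ 0 := by exact_mod_cast k.succ_ne_zero
    simp [polyAntideriv, lsum_apply, mul_comm, this, smul_monomial]

theorem polyIntegral_derivative (a b : K) (f : K[X]) :
    polyIntegral a b (derivative f) = f.eval b - f.eval a := by
  have hconst : derivative (polyAntideriv (derivative f) - f) = 0 := by
    rw [map_sub, derivative_polyAntideriv, sub_self]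
  obtain ⟨c, hc⟩ := natDegree_eq_zero.mp (derivative_eq_zero.mp hconst)
  rw [eq_sub_iff_add_eq] at hc
  simp [polyIntegral, ← hc]

theorem mul_polyIntegral_comp_C_mul_X (a b c : K) (f : K[X]) :
    c * polyIntegral a b (f.comp (C c * X)) = polyIntegral (c * a) (c * b) f := by
  obtain ⟨g, rfl⟩ : ∃ g, derivative g = f := ⟨_, derivative_polyAntideriv f⟩
  have hcomp : derivative (g.comp (C c * X)) = c • (derivative g).comp (C c * X) := by
    simp [derivative_comp, smul_eq_C_mul]
  rw [← smul_eq_mul, ← map_smul, ← hcomp]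
  simp only [polyIntegral_derivative, eval_comp, eval_C_mul, eval_X]

theorem polyIntegral_zero_two_mul (a : K) (f : K[X]) :
    polyIntegral 0 (2 * a) f = polyIntegral 0 a (f + f.comp (C (2 * a) - X)) := by
  obtain ⟨g, rfl⟩ : ∃ g, derivative g = f := ⟨_, derivative_polyAntideriv f⟩
  have hcomp : (derivative g).comp (C (2 * a) - X) = -derivative (g.comp (C (2 * a) - X)) := by
    simp [derivative_comp]
  rw [hcomp, map_add, map_neg]
  simp only [polyIntegral_derivative, eval_comp, eval_sub, eval_C, eval_X]
  ring_nf

theorem polyIntegral_derivative_mul {a b : K} {f : K[X]} (ha : f.eval a = 0) (hb : f.eval b = 0)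
    (g : K[X]) :
    polyIntegral a b (derivative f * g) = -polyIntegral a b (f * derivative g) := by
  rw [eq_neg_iff_add_eq_zero, ← map_add, ← derivative_mul, polyIntegral_derivative]
  simp [ha, hb]

theorem polyIntegral_iterate_derivative_mul {a b : K} {f : K[X]} {n : ℕ}
    (ha : (X - C a) ^ n ∣ f) (hb : (X - C b) ^ n ∣ f) (g : K[X]) :
    polyIntegral a b (derivative^[n] f * g) =
      (-1) ^ n * polyIntegral a b (f * derivative^[n] g) := by
  induction n generalizing g with
  | zero => simp
  | succ n ih =>
    have eval_eq_zero {c : K} (hc : (X - C c) ^ (n + 1) ∣ f) : (derivative^[n] f).eval c = 0 := by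
      rw [← IsRoot.def, ← dvd_iff_isRoot]
      simpa using pow_sub_dvd_iterate_derivative_of_pow_dvd n hc
    rw [Function.iterate_succ_apply', polyIntegral_derivative_mul (eval_eq_zero ha)
      (eval_eq_zero hb), ih ((pow_dvd_pow _ n.le_succ).trans ha)
      ((pow_dvd_pow _ n.le_succ).trans hb), ← Function.iterate_succ_apply]
    ring

theorem polyIntegral_one_sub_X_pow (k : ℕ) :
    polyIntegral (0 : K) 1 ((1 - X) ^ k) = ((k : K) + 1)⁻¹ := by
  have hk : (k : K) + 1 ≠ 0 := by exact_mod_cast k.succ_ne_zero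
  have hderiv : derivative ((1 - X : K[X]) ^ (k + 1)) = -((k : K) + 1) • (1 - X) ^ k := by
    simp only [derivative_pow, derivative_sub, derivative_one, derivative_X, smul_eq_C_mul, map_neg,
      map_add, map_natCast, map_one, Nat.cast_add, Nat.cast_one, add_tsub_cancel_right]
    ring
  have hint := polyIntegral_derivative (0 : K) 1 ((1 - X) ^ (k + 1))
  rw [hderiv, map_smul, smul_eq_mul] at hint
  simp only [eval_pow, eval_sub, eval_one, eval_X, sub_self, sub_zero, one_pow,
    zero_pow k.succ_ne_zero] at hint
  field_simp
  linear_combination -hint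

theorem polyIntegral_X_pow_mul_one_sub_X_pow (j k : ℕ) :
    polyIntegral (0 : K) 1 (X ^ j * (1 - X) ^ k) =
      (j.factorial * k.factorial : K) / (j + k + 1).factorial := by
  induction j generalizing k with
  | zero =>
    have hk : (k : K) + 1 ≠ 0 := by exact_mod_cast k.succ_ne_zero
    have hk' : (k.factorial : K) ≠ 0 := by exact_mod_cast k.factorial_ne_zero
    rw [pow_zero, one_mul, polyIntegral_one_sub_X_pow, zero_add, Nat.factorial_succ]
    push_cast
    field_simp
    simp
  | succ j ih =>
    have hk : (k : K) + 1 ≠ 0 := by exact_mod_cast k.succ_ne_zero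
    have hparts := polyIntegral_derivative (0 : K) 1 (X ^ (j + 1) * (1 - X) ^ (k + 1))
    have hderiv : derivative (X ^ (j + 1) * (1 - X : K[X]) ^ (k + 1)) =
        ((j : K) + 1) • (X ^ j * (1 - X) ^ (k + 1)) -
          ((k : K) + 1) • (X ^ (j + 1) * (1 - X) ^ k) := by
      simp only [derivative_mul, derivative_pow, derivative_sub, derivative_one, derivative_X,
        smul_eq_C_mul, map_add, map_natCast, map_one, Nat.cast_add, Nat.cast_one,
        add_tsub_cancel_right]
      ring
    rw [hderiv, map_sub, map_smul, map_smul, ih, smul_eq_mul, smul_eq_mul] at hparts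
    simp only [eval_mul, eval_pow, eval_sub, eval_X, eval_one, sub_self, sub_zero, one_pow,
      zero_pow (Nat.succ_ne_zero _), mul_zero, zero_mul] at hparts
    rw [show j + 1 + k + 1 = j + (k + 1) + 1 by ring, Nat.factorial_succ j]
    rw [Nat.factorial_succ k] at hparts
    push_cast at hparts ⊢
    apply mul_left_cancel₀ hk
    linear_combination -hparts

theorem polyIntegral_X_pow_succ_mul_one_sub_X_pow_self (n : ℕ) :
    polyIntegral (0 : K) 1 (X ^ (n + 1) * (1 - X) ^ n) =
      polyIntegral (0 : K) 1 (X ^ n * (1 - X) ^ n) / 2 := by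
  have hn : (n : K) + 1 ≠ 0 := by exact_mod_cast n.succ_ne_zero
  have hfac : ((2 * n + 1).factorial : K) ≠ 0 := by exact_mod_cast (2 * n + 1).factorial_ne_zero
  rw [polyIntegral_X_pow_mul_one_sub_X_pow, polyIntegral_X_pow_mul_one_sub_X_pow,
    show n + 1 + n + 1 = 2 * n + 1 + 1 by ring, show n + n + 1 = 2 * n + 1 by ring,
    Nat.factorial_succ n, Nat.factorial_succ (2 * n + 1)]
  push_cast
  rw [show (2 * n + 1 + 1 : K) = 2 * (n + 1) by ring]
  field_simp

end PolynomialIntegral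

section CoefficientExtraction

variable {R : Type*} [CommSemiring R]

theorem iterate_derivative_eq_of_natDegree_le_succ {n : ℕ} {g : R[X]}
    (hg : g.natDegree ≤ n + 1) :
    derivative^[n] g =
      (n.factorial : R) • (((n + 1) * g.coeff (n + 1)) • X + C (g.coeff n)) := by
  have hdeg : (derivative^[n] g).natDegree ≤ 1 :=
    (natDegree_iterate_derivative g n).trans (by lia)
  have hdesc : (n + 1).descFactorial n = (n + 1) * n.factorial := by
    simpa [Nat.factorial_succ] using Nat.factorial_mul_descFactorial n.le_succ
  rw [eq_X_add_C_of_natDegree_le_one hdeg, coeff_iterate_derivative, coeff_iterate_derivative,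
    zero_add, add_comm 1 n, Nat.descFactorial_self, hdesc]
  simp only [nsmul_eq_mul, smul_eq_C_mul, map_mul, map_add, map_natCast, map_one, Nat.cast_mul,
    Nat.cast_add, Nat.cast_one]
  ring

theorem coeff_taylor_of_natDegree_le_succ {n : ℕ} {f : R[X]}
    (hf : f.natDegree ≤ n + 1) (r : R) :
    (taylor r f).coeff n = f.coeff n + (n + 1) * r * f.coeff (n + 1) := by
  have hdeg : (hasseDeriv n f).natDegree ≤ 1 := (natDegree_hasseDeriv_le f n).trans (by lia)
  rw [taylor_coeff, eq_X_add_C_of_natDegree_le_one hdeg]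
  simp only [hasseDeriv_coeff, zero_add, Nat.choose_self, add_comm 1 n, Nat.choose_succ_self_right,
    eval_add, eval_mul, eval_C, eval_X]
  push_cast
  ring

theorem coeff_taylor_of_natDegree_le {n : ℕ} {f : R[X]}
    (hf : f.natDegree ≤ n) (r : R) :
    (taylor r f).coeff n = f.coeff n := by
  rw [coeff_taylor_of_natDegree_le_succ (hf.trans n.le_succ),
    coeff_eq_zero_of_natDegree_lt (Nat.lt_succ_of_le hf), mul_zero, add_zero]

theorem coeff_X_mul_derivative_eq (f : R[X]) (n : ℕ) :
    (X * derivative f).coeff n = n * f.coeff n := by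
  cases n with
  | zero => simp
  | succ n =>
    rw [coeff_X_mul, coeff_derivative]
    push_cast
    ring

end CoefficientExtraction

section Legendre

/-- The shifted Legendre polynomial `∑ (-1)ᵏ C(h, k) C(h + k, h) xᵏ`, orthogonal on `[0, 1]`, with
coefficients in `R`; Mathlib's `shiftedLegendre` has integer coefficients. -/
noncomputable abbrev legendreOver (R : Type*) [CommRing R] (h : ℕ) : R[X] :=
  (shiftedLegendre h).map (Int.castRingHom R)

variable (R : Type*) [CommRing R] (h : ℕ)

theorem natDegree_legendreOver_le :
    (legendreOver R h).natDegree ≤ h :=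
  natDegree_map_le.trans (natDegree_shiftedLegendre h).le

theorem coeff_legendreOver (k : ℕ) :
    (legendreOver R h).coeff k = (-1) ^ k * h.choose k * (h + k).choose h := by
  rw [coeff_map, coeff_shiftedLegendre]
  simp

theorem coeff_legendreOver_self_mul_factorial_sq :
    (legendreOver R h).coeff h * (h.factorial : R) ^ 2 = (-1) ^ h * (2 * h).factorial := by
  rw [coeff_legendreOver, Nat.choose_self, two_mul, ← Nat.add_choose_mul_factorial_mul_factorial]
  push_cast
  ring

theorem two_mul_mul_coeff_X_mul_legendreOver :
    2 * h * (X * legendreOver R h).coeff h = -(h : R) ^ 2 * (legendreOver R h).coeff h := by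
  cases h with
  | zero => simp
  | succ h =>
    have hchoose : (h + 1 + (h + 1)).choose (h + 1) = 2 * (h + 1 + h).choose (h + 1) := by
      rw [← add_assoc, Nat.choose_succ_succ, Nat.choose_symm_add, two_mul]
    rw [coeff_X_mul, coeff_legendreOver, coeff_legendreOver, hchoose,
      Nat.choose_self, Nat.choose_succ_self_right]
    push_cast
    ring

theorem legendreOver_comp_one_sub_X :
    (legendreOver R h).comp (1 - X) =
      (-1) ^ h * legendreOver R h := by
  have hsymm : (-1) ^ h * (legendreOver R h).comp (1 - X) = legendreOver R h := by
    simpa [map_comp] using congrArg (map (Int.castRingHom R))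
      (neg_one_pow_mul_shiftedLegendre_comp_one_sub_X_eq h)
  nth_rw 2 [← hsymm]
  rw [← mul_assoc, ← mul_pow, neg_one_mul, neg_neg, one_pow, one_mul]

theorem legendreOver_comp_two_sub_X :
    (legendreOver R h).comp (2 - X) = (-1 : R) ^ h • taylor (-1) (legendreOver R h) := by
  have hcomp : (2 - X : R[X]) = (1 - X : R[X]).comp (X + C (-1)) := by
    rw [sub_comp, one_comp, X_comp, C_neg, C_1]
    ring
  rw [hcomp, ← comp_assoc, legendreOver_comp_one_sub_X, mul_comp, taylor_apply]
  simp [smul_eq_C_mul]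

theorem eval_one_legendreOver_sq :
    (legendreOver R h).eval 1 ^ 2 = 1 := by
  have hsymm := congrArg (eval 0) (legendreOver_comp_one_sub_X R h)
  have hzero : (legendreOver R h).eval 0 = 1 := by
    rw [← coeff_zero_eq_eval_zero, coeff_map, coeff_shiftedLegendre]
    simp
  simp only [eval_comp, eval_sub, eval_one, eval_X, sub_zero, eval_mul, eval_pow, eval_neg, hzero,
    mul_one] at hsymm
  rw [hsymm, ← pow_mul, mul_comm, pow_mul, neg_one_sq, one_pow]

theorem factorial_smul_legendreOver_eq_iterate_derivative :
    (h.factorial : R) • legendreOver R h =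
      derivative^[h] (X ^ h * (1 - X) ^ h) := by
  simpa [smul_eq_C_mul, ← iterate_derivative_map] using
    congrArg (map (Int.castRingHom R)) (factorial_mul_shiftedLegendre_eq h)

end Legendre

section LegendreIntegral

variable {K : Type*} [Field K] [CharZero K] {h : ℕ}

theorem polyIntegral_legendreOver_mul {g : K[X]} (hg : g.natDegree ≤ h + 1) :
    polyIntegral 0 1 (legendreOver K h * g) =
      (-1) ^ h * ((h.factorial : K) ^ 2 / (2 * h + 1).factorial) *
        (g.coeff h + (h + 1) / 2 * g.coeff (h + 1)) := by
  have hfac : (h.factorial : K) ≠ 0 := by exact_mod_cast h.factorial_ne_zero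
  have hzero : (X - C (0 : K)) ^ h ∣ X ^ h * (1 - X) ^ h := by simp
  have hone : (X - C (1 : K)) ^ h ∣ X ^ h * (1 - X) ^ h := by
    rw [C_1]
    exact (pow_dvd_pow_of_dvd (dvd_sub_comm.mp dvd_rfl) h).mul_left _
  have hsplit : X ^ h * (1 - X) ^ h * derivative^[h] g =
      (h.factorial : K) • (((h + 1) * g.coeff (h + 1)) • (X ^ (h + 1) * (1 - X) ^ h) +
        g.coeff h • (X ^ h * (1 - X) ^ h)) := by
    rw [iterate_derivative_eq_of_natDegree_le_succ hg]
    simp only [smul_eq_C_mul]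
    ring
  apply mul_left_cancel₀ hfac
  rw [← smul_eq_mul, ← map_smul, ← smul_mul_assoc,
    factorial_smul_legendreOver_eq_iterate_derivative,
    polyIntegral_iterate_derivative_mul hzero hone, hsplit, map_smul, map_add, map_smul, map_smul,
    polyIntegral_X_pow_succ_mul_one_sub_X_pow_self, polyIntegral_X_pow_mul_one_sub_X_pow,
    ← two_mul]
  simp only [smul_eq_mul]
  ring

theorem polyIntegral_legendreOver_mul_taylor_neg_one {g : K[X]}
    (hg : g.natDegree ≤ h + 1) :
    polyIntegral (0 : K) 1 (legendreOver K h * taylor (-1) g) =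
      (-1) ^ h * ((h.factorial : K) ^ 2 / (2 * h + 1).factorial) *
        (g.coeff h - (h + 1) / 2 * g.coeff (h + 1)) := by
  rw [polyIntegral_legendreOver_mul (by rwa [natDegree_taylor]),
    coeff_taylor_of_natDegree_le_succ hg, coeff_taylor_of_natDegree_le hg]
  ring

theorem polyIntegral_legendreOver_mul_taylor_neg_one_of_natDegree_le {f : K[X]}
    (hf : f.natDegree ≤ h) :
    polyIntegral (0 : K) 1 ((legendreOver K h) *
        taylor (-1) (C 8 * (X * derivative (X * f)) - C 8 * derivative f + C 2 * f)) =
      (-1) ^ h * ((h.factorial : K) ^ 2 / (2 * h + 1).factorial) *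
        (8 * h * (X * f).coeff h + (2 - 4 * (h + 1) ^ 2) * f.coeff h) := by
  have hf' : f.coeff (h + 1) = 0 := coeff_eq_zero_of_natDegree_lt (Nat.lt_succ_of_le hf)
  have hf'' : f.coeff (h + 1 + 1) = 0 := coeff_eq_zero_of_natDegree_lt (by lia)
  have hXf : (X * f).natDegree ≤ h + 1 := by
    simpa [add_comm] using natDegree_mul_le_of_le natDegree_X_le hf
  have hdeg : (C 8 * (X * derivative (X * f)) - C 8 * derivative f + C 2 * f).natDegree ≤
      h + 1 := by
    have hXderiv := natDegree_mul_le_of_le (natDegree_X_le (R := K))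
      (natDegree_derivative_le (X * f))
    refine natDegree_add_le_of_degree_le ((natDegree_sub_le _ _).trans (max_le ?_ ?_)) ?_
    · exact (natDegree_C_mul_le _ _).trans (by lia)
    · exact (natDegree_C_mul_le _ _).trans ((natDegree_derivative_le f).trans (by lia))
    · exact (natDegree_C_mul_le _ _).trans (by lia)
  rw [polyIntegral_legendreOver_mul_taylor_neg_one hdeg]
  simp only [coeff_add, coeff_sub, coeff_C_mul, coeff_X_mul_derivative_eq, coeff_X_mul,
    coeff_derivative, hf', hf'']
  push_cast
  ring

end LegendreIntegral

section WeightOperator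

/-- The differential operator `f ↦ 4x(2 - x)f' + (5 - 4x)f`, which `umbralEval 2 n` turns into
multiplication by the weight `8n + 5`. -/
noncomputable def weightOperator {R : Type*} [CommRing R] (f : R[X]) : R[X] :=
  4 * X * (2 - X) * derivative f + (5 - 4 * X) * f

theorem map_weightOperator {R S : Type*} [CommRing R] [CommRing S] (φ : R →+* S) (f : R[X]) :
    (weightOperator f).map φ = weightOperator (f.map φ) := by
  simp [weightOperator, derivative_map]

theorem natDegree_weightOperator_le {R : Type*} [CommRing R] (f : R[X]) :
    (weightOperator f).natDegree ≤ f.natDegree + 1 := by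
  have hquad : (4 * X * (2 - X) : R[X]).natDegree ≤ 2 := by compute_degree
  have hlin : (5 - 4 * X : R[X]).natDegree ≤ 1 := by compute_degree
  obtain hf | hf := Nat.eq_zero_or_pos f.natDegree
  · rw [weightOperator, derivative_of_natDegree_zero hf, mul_zero, zero_add]
    exact (natDegree_mul_le_of_le hlin le_rfl).trans (by lia)
  · refine natDegree_add_le_of_degree_le ?_ ?_
    · exact (natDegree_mul_le_of_le hquad (natDegree_derivative_le f)).trans (by lia)
    · exact (natDegree_mul_le_of_le hlin le_rfl).trans (by lia)

theorem sub_derivative_comp_two_sub_X_eq_smul_taylor {R : Type*} [CommRing R] {f : R[X]} {ε : R}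
    (hf : f.comp (2 - X) = ε • taylor (-1) f) :
    (8 * X - 6) * f.comp (2 - X) - 8 * X * (2 - X) * derivative (f.comp (2 - X)) =
      ε • taylor (-1) (C 8 * (X * derivative (X * f)) - C 8 * derivative f + C 2 * f) := by
  have hderiv : derivative (taylor (-1) f) = taylor (-1) (derivative f) := by
    simp [taylor_apply, derivative_comp]
  rw [hf, derivative_smul, hderiv, derivative_mul, derivative_X]
  simp only [map_add, map_sub, taylor_mul, taylor_C, taylor_X, taylor_one, smul_eq_C_mul, C_neg,
    C_1]
  simp only [map_ofNat C]
  ring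

variable {K : Type*} [Field K] [CharZero K]

theorem polyIntegral_weightOperator_mul_comp_two_sub_X (f : K[X]) :
    polyIntegral (0 : K) 2 (weightOperator f * f.comp (2 - X)) =
      4 * f.eval 1 ^ 2 + polyIntegral (0 : K) 1 (f * ((8 * X - 6) * f.comp (2 - X) -
        8 * X * (2 - X) * derivative (f.comp (2 - X)))) := by
  set q := f.comp (2 - X) with hq
  have hq' : (derivative f).comp (2 - X) = -derivative q := by simp [hq, derivative_comp]
  have hqq : q.comp (2 - X) = f := by simp [hq, comp_assoc]
  have hq1 : q.eval 1 = f.eval 1 := by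
    norm_num [hq, eval_comp]
  have hfold := polyIntegral_zero_two_mul (1 : K)
    (weightOperator f * q)
  rw [mul_one, map_ofNat] at hfold
  have htotal := polyIntegral_derivative (0 : K) 1 (4 * X * (2 - X) * f * q)
  have hsum : weightOperator f * q +
      (weightOperator f * q).comp (2 - X) =
      derivative (4 * X * (2 - X) * f * q) +
        f * ((8 * X - 6) * q - 8 * X * (2 - X) * derivative q) := by
    simp only [weightOperator, mul_comp, add_comp, sub_comp, X_comp, ofNat_comp, hq', hqq,
      derivative_mul, derivative_sub, derivative_X, derivative_ofNat]
    ring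
  rw [hfold, hsum, map_add, htotal]
  simp only [eval_mul, eval_sub, eval_ofNat, eval_X, hq1, mul_zero, zero_mul]
  ring

theorem polyIntegral_legendreOver_mul_comp_two_sub_X (h : ℕ) :
    polyIntegral (0 : K) 1 (legendreOver K h * ((8 * X - 6) * (legendreOver K h).comp (2 - X) -
      8 * X * (2 - X) * derivative ((legendreOver K h).comp (2 - X)))) =
      -2 * (-1) ^ h * (2 * h + 1) := by
  have hfac : ((2 * h).factorial : K) ≠ 0 := by exact_mod_cast (2 * h).factorial_ne_zero
  have h2 : (2 * h + 1 : K) ≠ 0 := by exact_mod_cast (2 * h).succ_ne_zero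
  have hlower := two_mul_mul_coeff_X_mul_legendreOver K h
  have hlead := coeff_legendreOver_self_mul_factorial_sq K h
  have hsign : ((-1 : K) ^ h) ^ 2 = 1 := by rw [← pow_mul, mul_comm, pow_mul, neg_one_sq, one_pow]
  rw [sub_derivative_comp_two_sub_X_eq_smul_taylor (legendreOver_comp_two_sub_X K h),
    mul_smul_comm, map_smul,
    polyIntegral_legendreOver_mul_taylor_neg_one_of_natDegree_le (natDegree_legendreOver_le K h),
    Nat.factorial_succ, smul_eq_mul, Nat.cast_mul, Nat.cast_succ, Nat.cast_mul, Nat.cast_ofNat]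
  calc
    _ = ((-1 : K) ^ h) ^ 2 * (-2 * (2 * h + 1) ^ 2) *
        ((legendreOver K h).coeff h * (h.factorial : K) ^ 2) /
        ((2 * h + 1) * (2 * h).factorial) := by
      linear_combination 4 * ((-1 : K) ^ h) ^ 2 * (h.factorial : K) ^ 2 /
        ((2 * h + 1) * (2 * h).factorial) * hlower
    _ = _ := by
      rw [hsign, hlead]
      field_simp

theorem polyIntegral_zero_two_weightOperator_legendreOver (h : ℕ) :
    polyIntegral (0 : K) 2 (weightOperator (legendreOver K h) * (legendreOver K h).comp (2 - X)) =
      4 - 2 * (-1) ^ h * (2 * h + 1) := by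
  rw [polyIntegral_weightOperator_mul_comp_two_sub_X, eval_one_legendreOver_sq,
    polyIntegral_legendreOver_mul_comp_two_sub_X]
  ring

theorem polyIntegral_zero_one_weightOperator_legendreOver (h : ℕ) :
    polyIntegral (0 : K) 1 ((weightOperator (legendreOver K h)).comp (C 2 * X) *
      (legendreOver K h).comp (C 2 * (1 - X))) = 2 - (-1) ^ h * (2 * h + 1) := by
  have hscale := mul_polyIntegral_comp_C_mul_X (0 : K) 1 2
    (weightOperator (legendreOver K h) * (legendreOver K h).comp (2 - X))
  have hcomp : (2 - X : K[X]).comp (C 2 * X) = C 2 * (1 - X) := by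
    rw [sub_comp, X_comp, mul_sub, mul_one, map_ofNat, ofNat_comp]
    rfl
  rw [mul_zero, mul_one, polyIntegral_zero_two_weightOperator_legendreOver, mul_comp, comp_assoc,
    hcomp] at hscale
  apply mul_left_cancel₀ (two_ne_zero (α := K))
  linear_combination hscale

end WeightOperator

section Umbral

/-- The umbral evaluation `∑ aₖ xᵏ ↦ ∑ aₖ (-c)ᵏ C(n, k)`. For `c = 2` it sends the shifted Legendre
polynomial of degree `h` to `t_n(h)`. -/
noncomputable def umbralEval {R : Type*} [CommRing R] (c : R) (n : ℕ) : R[X] →ₗ[R] R :=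
  lsum fun k ↦ ((-c) ^ k * n.choose k) • LinearMap.id

variable {R : Type*} [CommRing R]

theorem umbralEval_eq_sum_range (c : R) (n : ℕ) {f : R[X]} {N : ℕ} (hf : f.natDegree < N) :
    umbralEval c n f = ∑ k ∈ range N, f.coeff k * ((-c) ^ k * n.choose k) := by
  rw [umbralEval, lsum_apply, sum_over_range' _ (by simp) _ hf]
  exact sum_congr rfl fun k _ ↦ by simp [mul_comm]

theorem umbralEval_monomial (c : R) (n k : ℕ) (a : R) :
    umbralEval c n (monomial k a) = (-c) ^ k * n.choose k * a := by
  simp [umbralEval, lsum_apply, sum_monomial_index]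

theorem umbralEval_mul_umbralEval (c : R) (n : ℕ) (f g : R[X]) :
    umbralEval c n f * umbralEval c n g =
      ∑ j ∈ range (f.natDegree + 1), ∑ k ∈ range (g.natDegree + 1),
        f.coeff j * g.coeff k * (-c) ^ (j + k) * (n.choose j * n.choose k) := by
  rw [umbralEval_eq_sum_range c n f.natDegree.lt_succ_self,
    umbralEval_eq_sum_range c n g.natDegree.lt_succ_self, sum_mul_sum]
  exact sum_congr rfl fun j _ ↦ sum_congr rfl fun k _ ↦ by ring

theorem mul_umbralEval (c : R) (n : ℕ) (f : R[X]) :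
    c * n * umbralEval c n f =
      umbralEval c n (X * (C c * derivative f - derivative (X * f))) := by
  induction f using Polynomial.induction_on' with
  | add f g hf hg =>
    have hadd : X * (C c * derivative (f + g) - derivative (X * (f + g))) =
        X * (C c * derivative f - derivative (X * f)) +
          X * (C c * derivative g - derivative (X * g)) := by
      simp only [mul_add, map_add]
      ring
    rw [hadd, map_add, map_add, mul_add, hf, hg]
  | monomial k a =>
    have hchoose : (n * n.choose k : R) = k * n.choose k + (k + 1) * n.choose (k + 1) := by
      have hsucc := congrArg (Nat.cast : ℕ → R) (Nat.add_one_mul_choose_eq n k)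
      rw [Nat.choose_succ_succ] at hsucc
      push_cast at hsucc
      linear_combination hsucc
    have hX : X * (C c * derivative (monomial k a) - derivative (X * monomial k a)) =
        monomial k (c * k * a) - monomial (k + 1) ((k + 1) * a) := by
      have hderiv : X * derivative (monomial k a) = (k : R[X]) * monomial k a := by
        cases k <;> simp [← C_mul_X_pow_eq_monomial]
        ring
      simp only [← C_mul_X_pow_eq_monomial, derivative_mul, derivative_X, map_mul, map_add,
        map_natCast, map_one] at hderiv ⊢
      linear_combination (C c - X) * hderiv
    rw [hX, map_sub]
    simp only [umbralEval_monomial]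
    linear_combination c * (-c) ^ k * a * hchoose

theorem eight_mul_add_five_mul_umbralEval_two (n : ℕ) (f : R[X]) :
    (8 * n + 5) * umbralEval 2 n f =
      umbralEval 2 n (weightOperator f) := by
  have hsplit : weightOperator f =
      (4 : R) • (X * (C 2 * derivative f - derivative (X * f))) + (5 : R) • f := by
    simp only [weightOperator, smul_eq_C_mul, derivative_mul, derivative_X, map_ofNat]
    ring
  rw [hsplit, map_add, map_smul, map_smul, ← mul_umbralEval, smul_eq_mul, smul_eq_mul]
  ring

end Umbral

section BinomialCongruence

theorem sum_range_choose_mul_choose_add (j k N : ℕ) :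
    ∑ n ∈ range N, n.choose j * n.choose k + ∑ n ∈ range N, n.choose j * n.choose (k + 1) +
        ∑ n ∈ range N, n.choose (j + 1) * n.choose k =
      N.choose (j + 1) * N.choose (k + 1) := by
  induction N with
  | zero => simp
  | succ N ih =>
    simp only [sum_range_succ, Nat.choose_succ_succ]
    linear_combination ih

theorem sum_range_choose (k N : ℕ) : ∑ n ∈ range N, n.choose k = N.choose (k + 1) := by
  induction N with
  | zero => simp
  | succ N ih => rw [sum_range_succ, ih, Nat.choose_succ_succ, add_comm]

variable (p : ℕ) [Fact p.Prime]

/-- The fractional ideal `pᵐℤ_p` of `ℚ_p`, the modulus of congruences between `p`-adic numbers. -/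
noncomputable def padicPow (m : ℕ) : Submodule ℤ_[p] ℚ_[p] := ℤ_[p] ∙ (p ^ m : ℚ_[p])

variable {p}

theorem mem_padicPow_iff {m : ℕ} {x : ℚ_[p]} : x ∈ padicPow p m ↔ ‖x‖ ≤ (p : ℝ) ^ (-m : ℤ) := by
  have hp : (p ^ m : ℚ_[p]) ≠ 0 := pow_ne_zero _ (by exact_mod_cast (Fact.out : p.Prime).ne_zero)
  rw [padicPow, Submodule.mem_span_singleton, ← Padic.norm_p_pow]
  constructor
  · rintro ⟨a, rfl⟩
    rw [Algebra.smul_def, norm_mul]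
    exact mul_le_of_le_one_left (norm_nonneg _) a.norm_le_one
  · intro hx
    refine ⟨⟨x / p ^ m, ?_⟩, div_mul_cancel₀ x hp⟩
    rw [norm_div]
    exact div_le_one_of_le₀ hx (norm_nonneg _)

theorem smodEq_padicPow_iff {m : ℕ} {x y : ℚ_[p]} :
    x ≡ y [SMOD padicPow p m] ↔ ‖x - y‖ ≤ (p : ℝ) ^ (-m : ℤ) := by
  rw [SModEq.sub_mem, mem_padicPow_iff]

theorem intCast_mem_padicPow {m : ℕ} {a : ℤ} : (a : ℚ_[p]) ∈ padicPow p m ↔ (p ^ m : ℤ) ∣ a := by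
  rw [mem_padicPow_iff, Padic.norm_int_le_pow_iff_dvd]

theorem mul_mem_padicPow {m n : ℕ} {x y : ℚ_[p]} (hx : x ∈ padicPow p m) (hy : y ∈ padicPow p n) :
    x * y ∈ padicPow p (m + n) := by
  obtain ⟨a, rfl⟩ := Submodule.mem_span_singleton.mp hx
  obtain ⟨b, rfl⟩ := Submodule.mem_span_singleton.mp hy
  rw [smul_mul_smul_comm, ← pow_add]
  exact Submodule.mem_span_singleton.mpr ⟨a * b, rfl⟩

theorem inv_natCast_mem_padicPow_zero {k : ℕ} (hk : p.Coprime k) :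
    (k : ℚ_[p])⁻¹ ∈ padicPow p 0 := by
  rw [mem_padicPow_iff, norm_inv, Padic.norm_natCast_eq_one_iff.mpr hk]
  simp

theorem norm_le_one_of_smodEq {m : ℕ} {x y : ℚ_[p]} (hy : ‖y‖ ≤ 1)
    (hxy : x ≡ y [SMOD padicPow p m]) : ‖x‖ ≤ 1 := by
  have hdiff : ‖x - y‖ ≤ 1 := (smodEq_padicPow_iff.mp hxy).trans <|
    zpow_le_one_of_nonpos₀ (by exact_mod_cast (Fact.out : p.Prime).one_le) (by simp)
  simpa using (Padic.nonarchimedean (x - y) y).trans (max_le hdiff hy)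

theorem aeval_smodEq_aeval {m : ℕ} {x y : ℚ_[p]} (hy : ‖y‖ ≤ 1)
    (hxy : x ≡ y [SMOD padicPow p m]) (f : ℤ[X]) :
    aeval x f ≡ aeval y f [SMOD padicPow p m] := by
  obtain ⟨a, rfl⟩ : ∃ a : ℤ_[p], algebraMap ℤ_[p] ℚ_[p] a = x :=
    ⟨⟨x, norm_le_one_of_smodEq hy hxy⟩, rfl⟩
  obtain ⟨b, rfl⟩ : ∃ b : ℤ_[p], algebraMap ℤ_[p] ℚ_[p] b = y := ⟨⟨y, hy⟩, rfl⟩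
  rw [smodEq_padicPow_iff] at hxy ⊢
  rw [aeval_algebraMap_apply, aeval_algebraMap_apply]
  exact (padic_polynomial_dist f a b).trans hxy

theorem natCast_choose_prime_mem_padicPow {k : ℕ} (hk : k + 1 < p) :
    (p.choose (k + 1) : ℚ_[p]) ∈ padicPow p 1 := by
  have hdvd : p ∣ p.choose (k + 1) := (Fact.out : p.Prime).dvd_choose_self k.succ_ne_zero hk
  rw [← Int.cast_natCast, intCast_mem_padicPow, pow_one]
  exact_mod_cast hdvd

theorem choose_prime_sub_one_smodEq {k : ℕ} (hk : k < p) :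
    ((p - 1).choose k : ℚ_[p]) ≡ (-1) ^ k [SMOD padicPow p 1] := by
  induction k with
  | zero => simp [SModEq.refl]
  | succ k ih =>
    have hpascal : ((p - 1).choose (k + 1) : ℚ_[p]) = p.choose (k + 1) - (p - 1).choose k := by
      rw [eq_sub_iff_add_eq']
      exact_mod_cast (Nat.choose_eq_choose_pred_add (by lia) k.succ_pos).symm
    rw [hpascal, pow_succ, mul_neg_one, ← zero_sub]
    exact (SModEq.zero.mpr (natCast_choose_prime_mem_padicPow hk)).sub (ih (by lia))

theorem choose_prime_smodEq (hp : p ≠ 2) {k : ℕ} (hk : k < p) :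
    (p.choose (k + 1) : ℚ_[p]) ≡ p * ((-1) ^ k * ((k : ℚ_[p]) + 1)⁻¹) [SMOD padicPow p 2] := by
  have hprime : p.Prime := Fact.out
  have hk0 : (k : ℚ_[p]) + 1 ≠ 0 := by exact_mod_cast k.succ_ne_zero
  obtain rfl | hkp : p = k + 1 ∨ k + 1 < p := by lia
  · have heven : Even k := by simpa [Nat.odd_add_one] using hprime.odd_of_ne_two hp
    simp [heven.neg_one_pow, SModEq.refl, hk0]
  · have hpmem : (p : ℚ_[p]) ∈ padicPow p 1 := by
      rw [← Int.cast_natCast, intCast_mem_padicPow, pow_one]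
    have hinv : ((k : ℚ_[p]) + 1)⁻¹ ∈ padicPow p 0 := by
      have hcop : p.Coprime (k + 1) := Nat.coprime_of_lt_prime k.succ_ne_zero hkp hprime
      exact_mod_cast inv_natCast_mem_padicPow_zero hcop
    have hchoose : (p.choose (k + 1) : ℚ_[p]) = p * (p - 1).choose k * ((k : ℚ_[p]) + 1)⁻¹ := by
      have habsorb := Nat.add_one_mul_choose_eq (p - 1) k
      rw [Nat.sub_add_cancel hprime.one_le] at habsorb
      rw [eq_mul_inv_iff_mul_eq₀ hk0]
      exact_mod_cast habsorb.symm
    have hpred : ((p - 1).choose k - (-1) ^ k : ℚ_[p]) ∈ padicPow p 1 :=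
      SModEq.sub_mem.mp (choose_prime_sub_one_smodEq hk)
    have hfactor : (p.choose (k + 1) : ℚ_[p]) - p * ((-1) ^ k * ((k : ℚ_[p]) + 1)⁻¹) =
        p * ((p - 1).choose k - (-1) ^ k) * ((k : ℚ_[p]) + 1)⁻¹ := by
      rw [hchoose]
      ring
    have hprod := mul_mem_padicPow (mul_mem_padicPow hpmem hpred) hinv
    rwa [SModEq.sub_mem, hfactor]

theorem sum_mul_choose_sub_one_smodEq (hp : p ≠ 2) :
    ∑ n ∈ range p, (n * n.choose (p - 1) : ℚ_[p]) ≡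
      p * ((-1) ^ p * polyIntegral 0 1 (X * (1 - X) ^ (p - 1))) [SMOD padicPow p 2] := by
  have hprime : p.Prime := Fact.out
  obtain ⟨k, rfl⟩ : ∃ k, p = k + 1 := ⟨p - 1, (Nat.sub_add_cancel hprime.one_le).symm⟩
  have hsum : ∑ n ∈ range (k + 1), (n * n.choose k : ℚ_[k + 1]) = k := by
    rw [sum_range_succ, sum_eq_zero fun n hn ↦ by
      rw [Nat.choose_eq_zero_of_lt (mem_range.mp hn), Nat.cast_zero, mul_zero]]
    simp
  have hk1 : (k : ℚ_[k + 1]) + 1 ≠ 0 := by exact_mod_cast k.succ_ne_zero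
  have hk2 : (k : ℚ_[k + 1]) + 2 ≠ 0 := by exact_mod_cast (k + 1).succ_ne_zero
  have hint : polyIntegral (0 : ℚ_[k + 1]) 1 (X * (1 - X) ^ k) =
      ((k + 1) * (k + 2) : ℚ_[k + 1])⁻¹ := by
    have hfac : (k.factorial : ℚ_[k + 1]) ≠ 0 := by exact_mod_cast k.factorial_ne_zero
    have hbeta := polyIntegral_X_pow_mul_one_sub_X_pow (K := ℚ_[k + 1]) 1 k
    rw [pow_one, Nat.factorial_one, show 1 + k + 1 = k + 2 by ring, Nat.factorial_succ,
      Nat.factorial_succ] at hbeta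
    rw [hbeta]
    push_cast
    rw [add_assoc (k : ℚ_[k + 1]), one_add_one_eq_two]
    field_simp
  have hinv : ((k : ℚ_[k + 1]) + 2)⁻¹ ∈ padicPow (k + 1) 0 := by
    have hcop : (k + 1).Coprime (k + 2) := Nat.coprime_self_add_right.mpr (Nat.coprime_one_right _)
    exact_mod_cast inv_natCast_mem_padicPow_zero hcop
  have hsq : (((k + 1) ^ 2 : ℕ) : ℚ_[k + 1]) ∈ padicPow (k + 1) 2 := by
    rw [← Int.cast_natCast, intCast_mem_padicPow]
    simp
  rw [Nat.add_sub_cancel, hsum, (hprime.odd_of_ne_two hp).neg_one_pow, hint, SModEq.sub_mem]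
  have hprod := mul_mem_padicPow hsq hinv
  convert hprod using 1
  push_cast
  field_simp
  ring

theorem sum_choose_mul_choose_smodEq (hp : p ≠ 2) {j k : ℕ} (hj : j < p) (hk : k < p)
    (hjk : j + k ≤ p) :
    ∑ n ∈ range p, (n.choose j * n.choose k : ℚ_[p]) ≡
      p * ((-1) ^ (j + k) * polyIntegral 0 1 (X ^ j * (1 - X) ^ k)) [SMOD padicPow p 2] := by
  induction j generalizing k with
  | zero =>
    have hsum : ∑ n ∈ range p, (n.choose 0 * n.choose k : ℚ_[p]) = p.choose (k + 1) := by
      simp only [Nat.choose_zero_right, Nat.cast_one, one_mul]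
      exact_mod_cast sum_range_choose k p
    rw [hsum, pow_zero, one_mul, zero_add, polyIntegral_one_sub_X_pow]
    exact choose_prime_smodEq hp hk
  | succ j ih =>
    obtain hkp | hkp : k + 1 < p ∨ p = k + 1 := by lia
    · have hrec : ∑ n ∈ range p, (n.choose (j + 1) * n.choose k : ℚ_[p]) =
          p.choose (j + 1) * p.choose (k + 1) - ∑ n ∈ range p, (n.choose j * n.choose k : ℚ_[p]) -
            ∑ n ∈ range p, (n.choose j * n.choose (k + 1) : ℚ_[p]) := by
        have hpascal := congrArg (Nat.cast : ℕ → ℚ_[p]) (sum_range_choose_mul_choose_add j k p)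
        push_cast at hpascal
        linear_combination hpascal
      have hint : polyIntegral (0 : ℚ_[p]) 1 (X ^ (j + 1) * (1 - X) ^ k) =
          polyIntegral 0 1 (X ^ j * (1 - X) ^ k) -
            polyIntegral 0 1 (X ^ j * (1 - X) ^ (k + 1)) := by
        rw [← map_sub]
        ring_nf
      have hprod := mul_mem_padicPow (natCast_choose_prime_mem_padicPow hj)
        (natCast_choose_prime_mem_padicPow hkp)
      rw [hrec, hint]
      convert ((SModEq.zero.mpr hprod).sub (ih (by lia) hk (by lia))).sub
        (ih (k := k + 1) (by lia) hkp (by lia)) using 1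
      ring
    -- Here `C(p, k + 1) = 1` is prime to `p`, so the recursion is not available.
    · obtain rfl : j = 0 := by lia
      obtain rfl : k = p - 1 := by lia
      simpa [add_comm 1, ← hkp] using sum_mul_choose_sub_one_smodEq hp

end BinomialCongruence

section Pairing

theorem polyIntegral_comp_mul_comp {K : Type*} [Field K] (c : K) (f g : K[X]) :
    polyIntegral 0 1 (f.comp (C c * X) * g.comp (C c * (1 - X))) =
      ∑ j ∈ range (f.natDegree + 1), ∑ k ∈ range (g.natDegree + 1),
        f.coeff j * g.coeff k * (-c) ^ (j + k) *
          ((-1) ^ (j + k) * polyIntegral 0 1 (X ^ j * (1 - X) ^ k)) := by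
  rw [comp, comp, eval₂_eq_sum_range, eval₂_eq_sum_range, sum_mul_sum, map_sum]
  refine sum_congr rfl fun j _ ↦ ?_
  rw [map_sum]
  refine sum_congr rfl fun k _ ↦ ?_
  have hmonomial : C (f.coeff j) * (C c * X) ^ j * (C (g.coeff k) * (C c * (1 - X)) ^ k) =
      (f.coeff j * g.coeff k * c ^ (j + k)) • (X ^ j * (1 - X) ^ k) := by
    simp only [smul_eq_C_mul, map_mul, map_pow, mul_pow]
    ring
  have hsign : (-c) ^ (j + k) * (-1) ^ (j + k) = c ^ (j + k) := by
    rw [← mul_pow, mul_neg_one, neg_neg]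
  rw [hmonomial, map_smul, smul_eq_mul, ← hsign]
  ring

variable {p : ℕ} [Fact p.Prime]

theorem sum_umbralEval_mul_umbralEval_smodEq (hp : p ≠ 2) (c : ℤ) {f g : ℤ[X]}
    (hf : f.natDegree < p) (hg : g.natDegree < p) (hfg : f.natDegree + g.natDegree ≤ p) :
    ∑ n ∈ range p, ((umbralEval c n f * umbralEval c n g : ℤ) : ℚ_[p]) ≡
      p * polyIntegral 0 1 ((f.map (Int.castRingHom ℚ_[p])).comp (C (c : ℚ_[p]) * X) *
        (g.map (Int.castRingHom ℚ_[p])).comp (C (c : ℚ_[p]) * (1 - X))) [SMOD padicPow p 2] := by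
  have hsum : ∑ n ∈ range p, ((umbralEval c n f * umbralEval c n g : ℤ) : ℚ_[p]) =
      ∑ j ∈ range (f.natDegree + 1), ∑ k ∈ range (g.natDegree + 1),
        (f.coeff j * g.coeff k * (-c) ^ (j + k)) •
          ∑ n ∈ range p, (n.choose j * n.choose k : ℚ_[p]) := by
    simp only [smul_sum, sum_comm (s := range (g.natDegree + 1)) (t := range p)]
    rw [sum_comm]
    refine sum_congr rfl fun n _ ↦ ?_
    rw [umbralEval_mul_umbralEval]
    push_cast
    simp only [zsmul_eq_mul]
    push_cast
    rfl
  have hint : p * polyIntegral 0 1 ((f.map (Int.castRingHom ℚ_[p])).comp (C (c : ℚ_[p]) * X) *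
        (g.map (Int.castRingHom ℚ_[p])).comp (C (c : ℚ_[p]) * (1 - X))) =
      ∑ j ∈ range (f.natDegree + 1), ∑ k ∈ range (g.natDegree + 1),
        (f.coeff j * g.coeff k * (-c) ^ (j + k)) •
          (p * ((-1) ^ (j + k) * polyIntegral 0 1 (X ^ j * (1 - X) ^ k)) : ℚ_[p]) := by
    rw [polyIntegral_comp_mul_comp, natDegree_map_eq_of_injective Int.cast_injective,
      natDegree_map_eq_of_injective Int.cast_injective, mul_sum]
    refine sum_congr rfl fun j _ ↦ (mul_sum _ _ _).trans (sum_congr rfl fun k _ ↦ ?_)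
    rw [coeff_map, coeff_map, zsmul_eq_mul, eq_intCast, eq_intCast]
    push_cast
    ring
  rw [hsum, hint]
  refine SModEq.sum fun j hj ↦ SModEq.sum fun k hk ↦ SModEq.zsmul ?_ _
  rw [mem_range] at hj hk
  exact sum_choose_mul_choose_smodEq hp (by lia) (by lia) (by lia)

theorem sum_weight_mul_umbralEval_shiftedLegendre_sq_smodEq {h : ℕ} (hph : p = 2 * h + 1) :
    ∑ n ∈ range p, (((8 * n + 5) * umbralEval 2 n (shiftedLegendre h) ^ 2 : ℤ) : ℚ_[p]) ≡
      2 * p [SMOD padicPow p 2] := by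
  have hh : 0 < h := by have := (Fact.out : p.Prime).one_lt; lia
  have hP : (shiftedLegendre h).natDegree = h := natDegree_shiftedLegendre h
  have hQ : (weightOperator (shiftedLegendre h)).natDegree ≤ h + 1 :=
    (natDegree_weightOperator_le _).trans (by lia)
  have hpair := sum_umbralEval_mul_umbralEval_smodEq (p := p) (by lia) 2
    (f := weightOperator (shiftedLegendre h)) (g := shiftedLegendre h) (by lia) (by lia) (by lia)
  rw [map_weightOperator, Int.cast_ofNat,
    polyIntegral_zero_one_weightOperator_legendreOver] at hpair
  have hsum (n : ℕ) : (8 * n + 5) * umbralEval 2 n (shiftedLegendre h) ^ 2 =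
      umbralEval 2 n (weightOperator (shiftedLegendre h)) * umbralEval 2 n (shiftedLegendre h) := by
    rw [← eight_mul_add_five_mul_umbralEval_two]
    ring
  simp only [hsum]
  refine hpair.trans ?_
  rw [SModEq.sub_mem]
  have hmem : ((-(-1) ^ h * p ^ 2 : ℤ) : ℚ_[p]) ∈ padicPow p 2 :=
    intCast_mem_padicPow.mpr (dvd_mul_left _ _)
  convert hmem using 1
  have hcast : (p : ℚ_[p]) = 2 * h + 1 := by exact_mod_cast congrArg (Nat.cast : ℕ → ℚ_[p]) hph
  push_cast
  linear_combination (p : ℚ_[p]) * (-1) ^ h * hcast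

end Pairing

section Tseq

variable {p : ℕ} [Fact p.Prime]

theorem gbinom_natCast (h k : ℕ) : gbinom (h : ℚ_[p]) k = h.choose k := by
  rw [gbinom, Nat.cast_choose_eq_descPochhammer_div, descPochhammer_eval_eq_prod_range]

theorem tseq_natCast (h n : ℕ) :
    tseq (h : ℚ_[p]) n = (umbralEval 2 n (shiftedLegendre h) : ℤ) := by
  have hN : (shiftedLegendre h).natDegree < n + 1 + h := by
    rw [natDegree_shiftedLegendre]
    lia
  have hsubset : range (n + 1) ⊆ range (n + 1 + h) := range_mono (by lia)
  rw [umbralEval_eq_sum_range 2 n hN, tseq, sum_subset hsubset, Int.cast_sum]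
  · refine sum_congr rfl fun k _ ↦ ?_
    have hsign : (-1 : ℚ_[p]) ^ k * (-2) ^ k = 2 ^ k := by rw [← mul_pow, neg_mul_neg, one_mul]
    rw [← Nat.cast_add, gbinom_natCast, gbinom_natCast, coeff_shiftedLegendre, Nat.choose_symm_add]
    push_cast
    linear_combination -(n.choose k * h.choose k * (h + k).choose k : ℚ_[p]) * hsign
  · intro k _ hk
    rw [Nat.choose_eq_zero_of_lt (by simpa [Nat.lt_succ_iff] using hk)]
    simp

theorem gbinom_mul_gbinom_add (x : ℚ_[p]) (k : ℕ) :
    gbinom x k * gbinom (x + (k : ℚ_[p])) k =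
      (∏ i ∈ range k, (x * (x + 1) - i * (i + 1))) * ((k.factorial ^ 2 : ℕ) : ℚ_[p])⁻¹ := by
  have hreflect : ∏ i ∈ range k, (x + (k : ℚ_[p]) - i) = ∏ i ∈ range k, (x + 1 + i) := by
    rw [← prod_range_reflect]
    refine prod_congr rfl fun i hi ↦ ?_
    rw [mem_range] at hi
    rw [Nat.sub_sub, Nat.cast_sub (by lia)]
    push_cast
    ring
  have hpair : (∏ i ∈ range k, (x - i)) * ∏ i ∈ range k, (x + 1 + i) =
      ∏ i ∈ range k, (x * (x + 1) - i * (i + 1)) := by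
    rw [← prod_mul_distrib]
    exact prod_congr rfl fun i _ ↦ by ring
  rw [gbinom, gbinom, hreflect, div_mul_div_comm, hpair, div_eq_mul_inv, Nat.cast_pow, sq]

theorem tseq_smodEq {m n : ℕ} (hn : n < p) {x y : ℚ_[p]} (hy : ‖y * (y + 1)‖ ≤ 1)
    (hxy : x * (x + 1) ≡ y * (y + 1) [SMOD padicPow p m]) :
    tseq x n ≡ tseq y n [SMOD padicPow p m] := by
  refine SModEq.sum fun k hk ↦ ?_
  have hcop : p.Coprime (k.factorial ^ 2) := by
    rw [mem_range] at hk
    exact ((Fact.out : p.Prime).coprime_factorial_of_lt (by lia)).pow_right 2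
  have hcoeff : ‖(n.choose k * 2 ^ k : ℕ) * ((k.factorial ^ 2 : ℕ) : ℚ_[p])⁻¹‖ ≤ 1 := by
    rw [norm_mul, norm_inv, Padic.norm_natCast_eq_one_iff.mpr hcop, inv_one, mul_one]
    exact IsUltrametricDist.norm_natCast_le_one _ _
  obtain ⟨c, hc⟩ : ∃ c : ℤ_[p],
      (c : ℚ_[p]) = (n.choose k * 2 ^ k : ℕ) * ((k.factorial ^ 2 : ℕ) : ℚ_[p])⁻¹ :=
    ⟨⟨_, hcoeff⟩, rfl⟩
  have hterm (u : ℚ_[p]) : n.choose k * gbinom u k * gbinom (u + (k : ℚ_[p])) k * 2 ^ k =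
      c • aeval (u * (u + 1)) (∏ i ∈ range k, (X - C (i * (i + 1) : ℤ))) := by
    rw [mul_assoc (n.choose k : ℚ_[p]), gbinom_mul_gbinom_add, Algebra.smul_def,
      PadicInt.algebraMap_apply, hc, map_prod]
    simp only [map_sub, map_mul, map_add, map_natCast, map_one, aeval_X]
    push_cast
    ring
  rw [hterm x, hterm y]
  exact (aeval_smodEq_aeval hy hxy _).smul _

theorem tseq_neg_half_smodEq {h n : ℕ} (hph : p = 2 * h + 1) (hn : n < p) :
    tseq (-1 / 2 : ℚ_[p]) n ≡ (umbralEval 2 n (shiftedLegendre h) : ℤ) [SMOD padicPow p 2] := by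
  have hcast : (p : ℚ_[p]) = 2 * h + 1 := by exact_mod_cast congrArg (Nat.cast : ℕ → ℚ_[p]) hph
  have hfour : p.Coprime 4 := by
    have htwo : p.Coprime 2 := Nat.coprime_two_right.mpr ⟨h, hph⟩
    exact htwo.pow_right 2
  have hinv : ((4 : ℕ) : ℚ_[p])⁻¹ ∈ padicPow p 0 := inv_natCast_mem_padicPow_zero hfour
  have hsq : ((-p ^ 2 : ℤ) : ℚ_[p]) ∈ padicPow p 2 := intCast_mem_padicPow.mpr (by simp)
  have hdiff : (-1 / 2 : ℚ_[p]) * (-1 / 2 + 1) - h * (h + 1) =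
      ((-p ^ 2 : ℤ) : ℚ_[p]) * ((4 : ℕ) : ℚ_[p])⁻¹ := by
    push_cast
    rw [hcast]
    ring
  rw [← tseq_natCast]
  refine tseq_smodEq hn ?_ ?_
  · exact_mod_cast IsUltrametricDist.norm_natCast_le_one ℚ_[p] (h * (h + 1))
  · have hprod := mul_mem_padicPow hsq hinv
    rwa [SModEq.sub_mem, hdiff]

end Tseq

theorem stmt_17 (p : ℕ) [Fact p.Prime] (hp : p ≠ 2) :
    ‖(∑ n ∈ Finset.range p, (8*(n : ℚ_[p]) + 5) * (tseq (-1/2 : ℚ_[p]) n)^2) - 2*(p : ℚ_[p])‖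
      ≤ (p : ℝ) ^ (-2 : ℤ) := by
  obtain ⟨h, hph⟩ : ∃ h, p = 2 * h + 1 := (Fact.out : p.Prime).odd_of_ne_two hp
  suffices hsum : ∑ n ∈ range p, (8 * (n : ℚ_[p]) + 5) * tseq (-1 / 2 : ℚ_[p]) n ^ 2 ≡ 2 * p
      [SMOD padicPow p 2] from smodEq_padicPow_iff.mp hsum
  refine (SModEq.sum fun n hn ↦ ?_).trans
    (sum_weight_mul_umbralEval_shiftedLegendre_sq_smodEq hph)
  have hsq := aeval_smodEq_aeval (Padic.norm_int_le_one _)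
    (tseq_neg_half_smodEq hph (mem_range.mp hn)) (X ^ 2)
  rw [map_pow, map_pow, aeval_X, aeval_X] at hsq
  convert hsq.nsmul (8 * n + 5) using 1 <;> simp [nsmul_eq_mul]
end

section
/- Define t_n(x) = Σ_{k=0}^n C(n,k)*C(x,k)*C(x+k,k)*2^k with x = −1/4 in Z_p. For any odd prime p, Σ_{n=0}^{p-1} (32n+21)·t_n(−1/4)^2 ≡ 8p (mod p^2). -/
/-!
Let `S(x) = ∑_{n < p} (4n + 3 + 2x(x + 1)) t_n(x)²`. In any binomial ring,
`4y(S(y) - S(y - 1))` is a multiple of `p²` plus `4(y² - 1)` times the square of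
`∑_{n < p} (t_n(y) - t_n(y - 1))`. For `p`-adic integers the latter sum is divisible by `p`, so for
`p` odd `S(y) ≡ S(y - 1) (mod p²)` whenever `y` is a unit, and `S(x)` depends modulo `p²` only on
the multiple `pq` of `p` with `x ∈ {pq, …, pq + p - 1}`. The symmetry `t_n(-1 - x) = t_n(x)` links
two such blocks: `S(-p) ≡ S(-1) = S(0)`. As `S` is a polynomial with `p`-integral coefficients,
`q ↦ S(pq)` is affine modulo `p²`, hence constant, and `S(0) = p + 2p²` because `t_n(0) = 1`.
-/

open Finset

section BinomialTransform

variable {R : Type*} [CommRing R]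

/-- The binomial transform `n ↦ ∑ₖ C(n, k) aₖ` of a sequence `a`. -/
def binomialTransform (a : ℕ → R) (n : ℕ) : R :=
  ∑ k ∈ range (n + 1), n.choose k * a k

lemma binomialTransform_eq_sum_range (a : ℕ → R) {n N : ℕ} (h : n < N) :
    binomialTransform a n = ∑ k ∈ range N, n.choose k * a k := by
  refine sum_subset (range_mono h) fun k _ hk ↦ ?_
  rw [Nat.choose_eq_zero_of_lt (by simpa using hk), Nat.cast_zero, zero_mul]

lemma binomialTransform_add (a b : ℕ → R) (n : ℕ) :
    binomialTransform (fun k ↦ a k + b k) n = binomialTransform a n + binomialTransform b n := by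
  simp only [binomialTransform, mul_add, sum_add_distrib]

lemma binomialTransform_sub (a b : ℕ → R) (n : ℕ) :
    binomialTransform (fun k ↦ a k - b k) n = binomialTransform a n - binomialTransform b n := by
  simp only [binomialTransform, mul_sub, sum_sub_distrib]

lemma binomialTransform_const_mul (c : R) (a : ℕ → R) (n : ℕ) :
    binomialTransform (fun k ↦ c * a k) n = c * binomialTransform a n := by
  simp only [binomialTransform, mul_sum, mul_left_comm]

lemma binomialTransform_succ (a : ℕ → R) (n : ℕ) :
    binomialTransform a (n + 1) =
      binomialTransform a n + binomialTransform (fun k ↦ a (k + 1)) n := by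
  rw [binomialTransform, sum_range_succ', binomialTransform_eq_sum_range a (by lia : n < n + 2),
    sum_range_succ' _ (n + 1), binomialTransform]
  simp only [Nat.choose_succ_succ', Nat.cast_add, add_mul, sum_add_distrib, Nat.choose_zero_right]
  ring

lemma binomialTransform_natCast_mul (a : ℕ → R) (n : ℕ) :
    binomialTransform (fun k ↦ k * a k) n =
      n * (binomialTransform a n - binomialTransform a (n - 1)) := by
  rcases n with _ | n
  · simp [binomialTransform]
  rw [Nat.add_sub_cancel, binomialTransform, binomialTransform,
    binomialTransform_eq_sum_range a (by lia : n < n + 2), ← sum_sub_distrib, mul_sum]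
  refine sum_congr rfl fun k _ ↦ ?_
  suffices ((n + 1).choose k * k : R) = (n + 1) * ((n + 1).choose k - n.choose k) by
    push_cast
    linear_combination a k * this
  rcases k with _ | k
  · simp
  have absorb : ((n + 1) * n.choose k : R) = (n + 1).choose (k + 1) * (k + 1) := by
    exact_mod_cast congrArg (Nat.cast (R := R)) (Nat.add_one_mul_choose_eq n k)
  rw [Nat.choose_succ_succ'] at absorb ⊢
  push_cast at absorb ⊢
  linear_combination -absorb

lemma sum_range_binomialTransform (a : ℕ → R) (N : ℕ) :
    ∑ n ∈ range N, binomialTransform a n = ∑ k ∈ range N, N.choose (k + 1) * a k := by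
  induction N with
  | zero => simp
  | succ N ih =>
    rw [sum_range_succ, ih, binomialTransform]
    simp only [Nat.choose_succ_succ' N, Nat.cast_add, add_mul, sum_add_distrib]
    rw [sum_range_succ (fun k ↦ (N.choose (k + 1) : R) * a k), Nat.choose_succ_self,
      Nat.cast_zero, zero_mul, add_zero, add_comm]

end BinomialTransform

section BinomialRing

variable {R : Type*} [CommRing R] [BinomialRing R]

lemma succ_mul_choose_succ (x : R) (k : ℕ) :
    (k + 1) * Ring.choose x (k + 1) = (x - k) * Ring.choose x k := by
  simpa [mul_comm] using Ring.choose_smul_choose x k.le_succ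

lemma succ_mul_choose_succ_eq_mul_choose_pred (x : R) (k : ℕ) :
    (k + 1) * Ring.choose x (k + 1) = x * Ring.choose (x - 1) k := by
  simpa using Ring.choose_smul_choose x (Nat.succ_pos k)

lemma factorial_mul_choose_eq_prod (x : R) (k : ℕ) :
    (k.factorial : R) * Ring.choose x k = ∏ i ∈ range k, (x - i) := by
  induction k with
  | zero => simp
  | succ k ih =>
    rw [prod_range_succ, ← ih, Nat.factorial_succ]
    push_cast
    linear_combination (k.factorial : R) * succ_mul_choose_succ x k

lemma dvd_choose_of_dvd_sub {a x : R} {i k : ℕ} (hk : IsUnit (k.factorial : R)) (hi : i < k)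
    (h : a ∣ x - i) : a ∣ Ring.choose x k := by
  rw [← hk.dvd_mul_left, factorial_mul_choose_eq_prod]
  exact h.trans (dvd_prod_of_mem _ (mem_range.mpr hi))

/-- The product `C(x, k) C(x + k, k)`, which is invariant under `x ↦ -1 - x`. -/
def symmChoose (x : R) (k : ℕ) : R :=
  Ring.choose x k * Ring.choose (x + k) k

lemma choose_neg_one_sub (x : R) (k : ℕ) :
    Ring.choose (-1 - x) k = (-1) ^ k * Ring.choose (x + k) k := by
  rw [show -1 - x = -(x + 1) by ring, Ring.choose_neg, add_right_comm, add_sub_cancel_right,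
    Units.smul_def, zsmul_eq_mul]
  simp [Int.negOnePow_def]

lemma symmChoose_neg_one_sub (x : R) (k : ℕ) : symmChoose (-1 - x) k = symmChoose x k := by
  have lower := choose_neg_one_sub x k
  have upper := choose_neg_one_sub (-1 - x) k
  rw [sub_sub_cancel] at upper
  rw [symmChoose, symmChoose, upper, lower]
  ring

lemma symmChoose_zero_left (k : ℕ) : symmChoose (0 : R) k = if k = 0 then 1 else 0 := by
  rw [symmChoose, Ring.choose_zero_ite]
  split_ifs with hk <;> simp [hk]

lemma sub_mul_symmChoose (y : R) (k : ℕ) :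
    (y - k) * symmChoose y k = (y + k) * symmChoose (y - 1) k := by
  have lower : (y - k) * Ring.choose y k = y * Ring.choose (y - 1) k := by
    rw [← succ_mul_choose_succ, succ_mul_choose_succ_eq_mul_choose_pred]
  have upper : y * Ring.choose (y + k) k = (y + k) * Ring.choose (y - 1 + k) k := by
    have h := (succ_mul_choose_succ (y + k) k).symm.trans
      (succ_mul_choose_succ_eq_mul_choose_pred (y + k) k)
    rwa [add_sub_cancel_right, add_sub_right_comm] at h
  simp only [symmChoose]
  linear_combination Ring.choose (y + k) k * lower + Ring.choose (y - 1) k * upper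

lemma succ_mul_symmChoose_succ_sub (y : R) (k : ℕ) :
    (k + 1) * (symmChoose y (k + 1) - symmChoose (y - 1) (k + 1)) =
      (y - k) * symmChoose y k + (y + k) * symmChoose (y - 1) k := by
  have pascal_lower := Ring.choose_succ_succ (y - 1) k
  have pascal_upper := Ring.choose_succ_succ (y + k) k
  have top := succ_mul_choose_succ y k
  have bottom := succ_mul_choose_succ_eq_mul_choose_pred (y + k) k
  rw [sub_add_cancel] at pascal_lower
  simp only [symmChoose]
  push_cast
  rw [← add_assoc, show y - 1 + (k + 1) = y + k by ring, pascal_upper,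
    show y - 1 + k = y + k - 1 by ring]
  linear_combination Ring.choose (y + k) k * top + Ring.choose (y - 1) k * bottom +
    (k + 1) * Ring.choose (y + k) (k + 1) * pascal_lower

/-- The value `t_n(x) = ∑ₖ C(n, k) C(x, k) C(x + k, k) 2ᵏ` at an element `x` of a binomial ring. -/
def tBinom (x : R) (n : ℕ) : R :=
  binomialTransform (fun k ↦ 2 ^ k * symmChoose x k) n

lemma tBinom_neg_one_sub (x : R) (n : ℕ) : tBinom (-1 - x) n = tBinom x n := by
  simp only [tBinom, symmChoose_neg_one_sub]

lemma tBinom_zero_left (n : ℕ) : tBinom (0 : R) n = 1 := by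
  simp [tBinom, binomialTransform, symmChoose_zero_left]

/-- The sum `t_n(y) + t_n(y - 1)` of values at neighbouring arguments. -/
def adjSum (y : R) (n : ℕ) : R :=
  tBinom y n + tBinom (y - 1) n

/-- The difference `t_n(y) - t_n(y - 1)` of values at neighbouring arguments. -/
def adjDiff (y : R) (n : ℕ) : R :=
  tBinom y n - tBinom (y - 1) n

lemma adjSum_eq_binomialTransform (y : R) : adjSum y =
    binomialTransform fun k ↦ 2 ^ k * (symmChoose y k + symmChoose (y - 1) k) := by
  ext n
  simp only [adjSum, tBinom, mul_add, binomialTransform_add]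

lemma adjDiff_eq_binomialTransform (y : R) : adjDiff y =
    binomialTransform fun k ↦ 2 ^ k * (symmChoose y k - symmChoose (y - 1) k) := by
  ext n
  simp only [adjDiff, tBinom, mul_sub, binomialTransform_sub]

-- For `n = 0` the factor `n` makes the truncated index `n - 1` harmless, here and below.
lemma mul_adjDiff (y : R) (n : ℕ) :
    y * adjDiff y n = n * (adjSum y n - adjSum y (n - 1)) := by
  rw [adjSum_eq_binomialTransform, adjDiff_eq_binomialTransform, ← binomialTransform_natCast_mul,
    ← binomialTransform_const_mul]
  congr 1 with k
  linear_combination 2 ^ k * sub_mul_symmChoose y k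

lemma succ_mul_adjDiff_sub_add (y : R) (n : ℕ) :
    (n + 1) * (adjDiff y (n + 1) - adjDiff y n) + n * (adjDiff y n - adjDiff y (n - 1)) =
      2 * y * adjSum y n := by
  rw [adjSum_eq_binomialTransform, adjDiff_eq_binomialTransform]
  set d : ℕ → R := fun k ↦ 2 ^ k * (symmChoose y k - symmChoose (y - 1) k)
  have next := binomialTransform_natCast_mul d (n + 1)
  rw [binomialTransform_succ, Nat.add_sub_cancel, Nat.cast_succ] at next
  rw [← next, ← binomialTransform_natCast_mul, ← binomialTransform_add, ← binomialTransform_add,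
    ← binomialTransform_const_mul]
  congr 1 with k
  simp only [d]
  push_cast
  linear_combination 2 ^ (k + 1) * succ_mul_symmChoose_succ_sub y k

lemma natCast_mul_two_mul_adjSum_sub (y : R) (n : ℕ) :
    n * (2 * y * adjSum y (n - 1) - adjDiff y n - adjDiff y (n - 1)) =
      2 * (y ^ 2 - 1) * ∑ i ∈ range n, adjDiff y i := by
  induction n with
  | zero => simp
  | succ n ih =>
    rw [sum_range_succ, Nat.add_sub_cancel, Nat.cast_succ]
    linear_combination ih - succ_mul_adjDiff_sub_add y n - 2 * y * mul_adjDiff y n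

/-- The sum `∑_{n < N} (4n + 3 + 2x(x + 1)) t_n(x)²`; at `x = -1/4` the weight is
`(32n + 21) / 8`. -/
def weightedSqSum (x : R) (N : ℕ) : R :=
  ∑ n ∈ range N, (4 * n + 3 + 2 * x * (x + 1)) * tBinom x n ^ 2

lemma weightedSqSum_neg_one_sub (x : R) (N : ℕ) :
    weightedSqSum (-1 - x) N = weightedSqSum x N := by
  simp only [weightedSqSum, tBinom_neg_one_sub]
  congr! 2
  ring

lemma weightedSqSum_zero_left (N : ℕ) : weightedSqSum (0 : R) N = N + 2 * N ^ 2 := by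
  simp only [weightedSqSum, tBinom_zero_left]
  induction N with
  | zero => simp
  | succ N ih =>
    rw [sum_range_succ, ih]
    push_cast
    ring

lemma sq_dvd_weightedSqSum_two_sub (x : R) : 2 ^ 2 ∣ weightedSqSum x 2 - 2 := by
  have value_zero : tBinom x 0 = 1 := by simp [tBinom, binomialTransform, symmChoose]
  have value_one : tBinom x 1 = 1 + 2 * (x * (x + 1)) := by
    simp [tBinom, binomialTransform, symmChoose, sum_range_succ]
  refine ⟨2 + 8 * (x * (x + 1)) + 9 * (x * (x + 1)) ^ 2 + 2 * (x * (x + 1)) ^ 3, ?_⟩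
  rw [weightedSqSum, sum_range_succ, sum_range_one, value_zero, value_one]
  push_cast
  ring

lemma four_mul_weightedSqSum_sub (y : R) (n : ℕ) :
    4 * y * (weightedSqSum y n - weightedSqSum (y - 1) n) =
      n ^ 2 * (4 * (adjSum y n - adjSum y (n - 1)) * (adjSum y (n - 1) + y * adjDiff y (n - 1)) -
        (adjDiff y n ^ 2 + adjDiff y (n - 1) ^ 2 - 6 * adjDiff y n * adjDiff y (n - 1))) +
      4 * (y ^ 2 - 1) * (∑ i ∈ range n, adjDiff y i) ^ 2 := by
  induction n with
  | zero => simp [weightedSqSum]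
  | succ n ih =>
    have increment : weightedSqSum y (n + 1) - weightedSqSum (y - 1) (n + 1) =
        weightedSqSum y n - weightedSqSum (y - 1) n +
          ((4 * n + 3 + 2 * y ^ 2) * adjSum y n * adjDiff y n +
            y * (adjSum y n ^ 2 + adjDiff y n ^ 2)) := by
      simp only [weightedSqSum, sum_range_succ, adjSum, adjDiff]
      ring
    have sum_rec := mul_adjDiff y n
    have sum_rec_succ := mul_adjDiff y (n + 1)
    have diff_rec := succ_mul_adjDiff_sub_add y n
    have partial_sum := natCast_mul_two_mul_adjSum_sub y n
    rw [increment, sum_range_succ]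
    rw [Nat.add_sub_cancel] at sum_rec_succ ⊢
    push_cast at sum_rec_succ ⊢
    set s := adjSum y n
    set e := adjDiff y n
    set e' := adjDiff y (n - 1)
    linear_combination ih + 4 * (n + 1) * (s + y * e) * sum_rec_succ
      - 4 * (n * (adjSum y (n - 1) + y * e') + y * e) * sum_rec
      + ((n + 1) * adjDiff y (n + 1) + e + n * e' + 2 * y * s - 4 * y * (s + y * e)
        - 6 * (n + 1) * e) * diff_rec
      + 4 * e * partial_sum

end BinomialRing

section PolynomialFunction

variable {R : Type*} [CommRing R]

lemma exists_sq_dvd_sub_sub_of_mem_adjoin_id {f : R → R} (hf : f ∈ Algebra.adjoin R {id}) (x : R) :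
    ∃ d, ∀ h, h ^ 2 ∣ f (x + h) - f x - d * h := by
  rw [Algebra.adjoin_singleton_eq_range_aeval] at hf
  obtain ⟨P, rfl⟩ := hf
  refine ⟨P.derivative.eval x, fun h ↦ ?_⟩
  obtain ⟨c, hc⟩ := P.binomExpansion x h
  refine ⟨c, ?_⟩
  simp only [AlgHom.toRingHom_eq_coe, RingHom.coe_coe, Polynomial.aeval_fn_apply, id_eq,
    Polynomial.coe_aeval_eq_eval, hc]
  ring

variable [BinomialRing R]

lemma choose_add_mem_adjoin_id {k : ℕ} (hk : IsUnit (k.factorial : R)) (c : R) :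
    (fun x ↦ Ring.choose (x + c) k) ∈ Algebra.adjoin R {(id : R → R)} := by
  obtain ⟨u, hu⟩ := hk
  have hprod : (fun x ↦ Ring.choose (x + c) k) =
      (↑u⁻¹ : R) • ∏ i ∈ range k, ((id : R → R) + algebraMap R (R → R) (c - i)) := by
    ext x
    simp only [Pi.smul_apply, prod_apply, Pi.add_apply, id_eq, Pi.algebraMap_apply, smul_eq_mul,
      Algebra.algebraMap_self, RingHom.id_apply]
    rw [Units.eq_inv_mul_iff_mul_eq, hu, factorial_mul_choose_eq_prod]
    simp only [add_sub_assoc]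
  rw [hprod]
  refine Subalgebra.smul_mem _ (Subalgebra.prod_mem _ fun i _ ↦ ?_) _
  exact add_mem (Algebra.self_mem_adjoin_singleton R _) (Subalgebra.algebraMap_mem _ _)

lemma tBinom_mem_adjoin_id {n : ℕ} (hn : IsUnit (n.factorial : R)) :
    (fun x : R ↦ tBinom x n) ∈ Algebra.adjoin R {(id : R → R)} := by
  have hsum : (fun x : R ↦ tBinom x n) = ∑ k ∈ range (n + 1),
      (((n.choose k * 2 ^ k : ℕ) : R → R) * ((fun x : R ↦ Ring.choose (x + 0) k) *
        fun x : R ↦ Ring.choose (x + k) k)) := by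
    ext x
    simp [tBinom, binomialTransform, symmChoose, mul_assoc]
  rw [hsum]
  refine sum_mem fun k hk ↦ mul_mem (natCast_mem _ _) ?_
  have hk_unit : IsUnit (k.factorial : R) := isUnit_of_dvd_unit
    (Nat.cast_dvd_cast (Nat.factorial_dvd_factorial (mem_range_succ_iff.mp hk))) hn
  exact mul_mem (choose_add_mem_adjoin_id hk_unit 0) (choose_add_mem_adjoin_id hk_unit k)

lemma weightedSqSum_mem_adjoin_id {N : ℕ} (hN : ∀ n < N, IsUnit (n.factorial : R)) :
    (fun x : R ↦ weightedSqSum x N) ∈ Algebra.adjoin R {(id : R → R)} := by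
  have hsum : (fun x : R ↦ weightedSqSum x N) = ∑ n ∈ range N,
      (((4 * n + 3 : ℕ) : R → R) + 2 * id * (id + 1)) * (fun x ↦ tBinom x n) ^ 2 := by
    ext x
    simp [weightedSqSum]
  have hid : (id : R → R) ∈ Algebra.adjoin R {id} := Algebra.self_mem_adjoin_singleton R _
  rw [hsum]
  refine sum_mem fun n hn ↦ mul_mem (add_mem (natCast_mem _ _) ?_)
    (pow_mem (tBinom_mem_adjoin_id (hN n (mem_range.mp hn))) 2)
  exact mul_mem (mul_mem (ofNat_mem _ 2) hid) (add_mem hid (one_mem _))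

end PolynomialFunction

section PadicInt

variable {p : ℕ} [Fact p.Prime]

lemma isUnit_padicInt_iff_not_dvd {z : ℤ_[p]} : IsUnit z ↔ ¬(p : ℤ_[p]) ∣ z := by
  rw [← PadicInt.norm_lt_one_iff_dvd, ← PadicInt.not_isUnit_iff, not_not]

lemma isUnit_natCast_padicInt {n : ℕ} (hn : p.Coprime n) : IsUnit (n : ℤ_[p]) :=
  PadicInt.isUnit_iff.mpr (PadicInt.norm_natCast_eq_one_iff.mpr hn)

lemma isUnit_four_padicInt (hp : p ≠ 2) : IsUnit (4 : ℤ_[p]) := by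
  have hcoprime := ((Nat.coprime_primes Fact.out Nat.prime_two).mpr hp).pow_right 2
  exact_mod_cast isUnit_natCast_padicInt hcoprime

lemma isUnit_factorial_padicInt {k : ℕ} (hk : k < p) : IsUnit (k.factorial : ℤ_[p]) :=
  isUnit_natCast_padicInt ((Fact.out : p.Prime).coprime_factorial_of_lt hk)

lemma exists_natCast_lt_dvd_sub (x : ℤ_[p]) : ∃ r < p, (p : ℤ_[p]) ∣ x - r := by
  obtain ⟨r, hr, hx⟩ := PadicInt.exists_mem_range x
  refine ⟨r, hr, ?_⟩
  rwa [PadicInt.maximalIdeal_eq_span_p, Ideal.mem_span_singleton] at hx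

lemma dvd_symmChoose_pred (x : ℤ_[p]) : (p : ℤ_[p]) ∣ symmChoose x (p - 1) := by
  have hp : 1 < p := (Fact.out : p.Prime).one_lt
  have hunit := isUnit_factorial_padicInt (p := p) (Nat.sub_lt (by lia) one_pos)
  obtain ⟨r, hr, hxr⟩ := exists_natCast_lt_dvd_sub x
  obtain hr | rfl : r < p - 1 ∨ r = p - 1 := by lia
  · exact (dvd_choose_of_dvd_sub hunit hr hxr).mul_right _
  · rw [← symmChoose_neg_one_sub]
    refine (dvd_choose_of_dvd_sub (i := 0) hunit (by lia) ?_).mul_right _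
    rw [Nat.cast_pred (by lia)] at hxr
    convert ((dvd_refl (p : ℤ_[p])).add hxr).neg_right using 1
    push_cast
    ring

lemma dvd_sum_tBinom (x : ℤ_[p]) : (p : ℤ_[p]) ∣ ∑ n ∈ range p, tBinom x n := by
  simp only [tBinom, sum_range_binomialTransform]
  refine dvd_sum fun k hk ↦ ?_
  obtain hk | rfl : k + 1 < p ∨ k = p - 1 := by grind
  · exact (Nat.cast_dvd_cast ((Fact.out : p.Prime).dvd_choose_self k.succ_ne_zero hk)).mul_right _
  · exact ((dvd_symmChoose_pred x).mul_left _).mul_left _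

lemma sq_dvd_weightedSqSum_sub (hp : p ≠ 2) {y : ℤ_[p]} (hy : IsUnit y) :
    (p : ℤ_[p]) ^ 2 ∣ weightedSqSum y p - weightedSqSum (y - 1) p := by
  have hdiff : (p : ℤ_[p]) ∣ ∑ n ∈ range p, adjDiff y n := by
    simp only [adjDiff, sum_sub_distrib]
    exact (dvd_sum_tBinom y).sub (dvd_sum_tBinom (y - 1))
  rw [← ((isUnit_four_padicInt hp).mul hy).dvd_mul_left, four_mul_weightedSqSum_sub]
  exact (dvd_mul_right _ _).add ((pow_dvd_pow_of_dvd hdiff 2).mul_left _)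

lemma sq_dvd_weightedSqSum_mul_add_sub (hp : p ≠ 2) (q : ℤ_[p]) {i : ℕ} (hi : i < p) :
    (p : ℤ_[p]) ^ 2 ∣ weightedSqSum (p * q + i) p - weightedSqSum (p * q) p := by
  induction i with
  | zero => simp
  | succ i ih =>
    have hunit : IsUnit (p * q + (i + 1 : ℕ) : ℤ_[p]) := by
      rw [isUnit_padicInt_iff_not_dvd, dvd_add_right (dvd_mul_right _ _),
        ← isUnit_padicInt_iff_not_dvd]
      exact isUnit_natCast_padicInt (Nat.coprime_of_lt_prime i.succ_ne_zero hi Fact.out)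
    have hstep := sq_dvd_weightedSqSum_sub hp hunit
    rw [Nat.cast_succ, ← add_assoc, add_sub_cancel_right] at hstep
    rw [Nat.cast_succ, ← add_assoc]
    simpa using hstep.add (ih (by lia))

lemma sq_dvd_weightedSqSum_mul_sub (hp : p ≠ 2) (q : ℤ_[p]) :
    (p : ℤ_[p]) ^ 2 ∣ weightedSqSum (p * q) p - weightedSqSum 0 p := by
  obtain ⟨d, hd⟩ := exists_sq_dvd_sub_sub_of_mem_adjoin_id
    (weightedSqSum_mem_adjoin_id fun _ ↦ isUnit_factorial_padicInt (p := p)) 0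
  have affine (c : ℤ_[p]) :
      (p : ℤ_[p]) ^ 2 ∣ weightedSqSum (p * c) p - weightedSqSum 0 p - d * (p * c) := by
    simpa using (pow_dvd_pow_of_dvd (dvd_mul_right (p : ℤ_[p]) c) 2).trans (hd (p * c))
  have reflected : (p : ℤ_[p]) ^ 2 ∣ weightedSqSum 0 p - weightedSqSum (p * -1 : ℤ_[p]) p := by
    have hp_pos := (Fact.out : p.Prime).pos
    have h := sq_dvd_weightedSqSum_mul_add_sub hp (-1) (Nat.sub_lt hp_pos one_pos)
    rwa [Nat.cast_pred hp_pos, show p * -1 + (p - 1) = (-1 - 0 : ℤ_[p]) by ring,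
      weightedSqSum_neg_one_sub] at h
  have hslope : (p : ℤ_[p]) ^ 2 ∣ d * p := by
    convert reflected.add (affine (-1)) using 1
    ring
  convert (affine q).add (hslope.mul_right q) using 1
  ring

theorem sq_dvd_weightedSqSum_sub_prime (x : ℤ_[p]) :
    (p : ℤ_[p]) ^ 2 ∣ weightedSqSum x p - p := by
  obtain rfl | hp := eq_or_ne p 2
  · exact_mod_cast sq_dvd_weightedSqSum_two_sub x
  obtain ⟨r, hr, q, hq⟩ := exists_natCast_lt_dvd_sub x
  obtain rfl := sub_eq_iff_eq_add.mp hq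
  have hzero : (p : ℤ_[p]) ^ 2 ∣ weightedSqSum 0 p - p := by
    rw [weightedSqSum_zero_left, add_sub_cancel_left]
    exact dvd_mul_left _ _
  have h := ((sq_dvd_weightedSqSum_mul_add_sub hp q hr).add
    (sq_dvd_weightedSqSum_mul_sub hp q)).add hzero
  simpa using h

lemma gbinom_coe (x : ℤ_[p]) (k : ℕ) : gbinom (x : ℚ_[p]) k = (Ring.choose x k : ℤ_[p]) := by
  rw [gbinom, div_eq_iff (by exact_mod_cast k.factorial_ne_zero), mul_comm]
  have h := congrArg (PadicInt.Coe.ringHom (p := p)) (factorial_mul_choose_eq_prod x k)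
  rw [map_mul, map_prod] at h
  exact_mod_cast h.symm

lemma tseq_coe (x : ℤ_[p]) (n : ℕ) : tseq (x : ℚ_[p]) n = (tBinom x n : ℤ_[p]) := by
  rw [tseq, tBinom, binomialTransform, PadicInt.coe_sum]
  refine sum_congr rfl fun k _ ↦ ?_
  rw [gbinom_coe, ← PadicInt.coe_natCast k, ← PadicInt.coe_add, gbinom_coe, symmChoose]
  simp only [PadicInt.coe_mul, PadicInt.coe_pow, PadicInt.coe_natCast,
    show ((2 : ℤ_[p]) : ℚ_[p]) = 2 from rfl]
  ring

lemma norm_neg_one_div_four_le_one (hp : p ≠ 2) : ‖(-1 / 4 : ℚ_[p])‖ ≤ 1 := by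
  have norm_four : ‖(4 : ℚ_[p])‖ = 1 := PadicInt.isUnit_iff.mp (isUnit_four_padicInt hp)
  rw [norm_div, norm_four, norm_neg, norm_one, div_one]

end PadicInt

theorem stmt_18_general (p : ℕ) [Fact p.Prime] (x : ℚ_[p]) (hx : ‖x‖ ≤ 1) :
    ‖∑ n ∈ range p, (4 * (n : ℚ_[p]) + 3 + 2 * x * (x + 1)) * tseq x n ^ 2 - (p : ℚ_[p])‖
      ≤ (p : ℝ) ^ (-2 : ℤ) := by
  obtain ⟨x, rfl⟩ : ∃ z : ℤ_[p], (z : ℚ_[p]) = x := ⟨⟨x, hx⟩, rfl⟩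
  have hcast : ∑ n ∈ range p, (4 * (n : ℚ_[p]) + 3 + 2 * x * (x + 1)) * tseq (x : ℚ_[p]) n ^ 2 -
      (p : ℚ_[p]) = (weightedSqSum x p - p : ℤ_[p]) := by
    simp only [weightedSqSum, tseq_coe, PadicInt.coe_sub, PadicInt.coe_sum]
    norm_cast
  rw [hcast, ← PadicInt.norm_def]
  exact (PadicInt.norm_le_pow_iff_mem_span_pow _ 2).mpr
    (Ideal.mem_span_singleton.mpr (sq_dvd_weightedSqSum_sub_prime x))

theorem stmt_18 (p : ℕ) [Fact p.Prime] (hp : p ≠ 2) :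
    ‖(∑ n ∈ Finset.range p, (32*(n : ℚ_[p]) + 21) * (tseq (-1/4 : ℚ_[p]) n)^2) - 8*(p : ℚ_[p])‖
      ≤ (p : ℝ) ^ (-2 : ℤ) := by
  have h := stmt_18_general p (-1 / 4) (norm_neg_one_div_four_le_one hp)
  have norm_eight : ‖(8 : ℚ_[p])‖ ≤ 1 := Padic.norm_int_le_one 8
  refine Eq.trans_le ?_ ((mul_le_of_le_one_left (norm_nonneg _) norm_eight).trans h)
  rw [← norm_mul, mul_sub, mul_sum]
  congr! 3
  ring
end
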